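/- arXiv:1902.05671 — 4 statements merged into one kernel-verified Lean document; each statement's English description precedes it below -/
import Mathlib

section
/- For every integer k ≥ 2, the Laplacian spectrum of the k-vertex antiregular graph A_k consists of k distinct simple eigenvalues, namely the set Λ_k = {0, 1, 2, …, k} \ {⌈k/2⌉}. -/
/-- Laplacian matrix of the `k`-vertex antiregular graph, vertices `0,…,k-1`
(0-indexed; 1-indexed vertices `i+1` and `j+1` are adjacent iff
`(i+1)+(j+1) ≤ k+1`, i.e. vertices are in nonincreasing degree order). -/
def antiregLap (k : ℕ) : Matrix (Fin k) (Fin k) ℝ :=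
  Matrix.of fun i j =>
    if i = j then
      ((Finset.univ.filter fun m : Fin k => m ≠ i ∧ i.val + m.val + 2 ≤ k + 1).card : ℝ)
    else if i.val + j.val + 2 ≤ k + 1 then -1 else 0

/-!
Vertex `0` of `A_{k+1}` is adjacent to all the others, and the others induce the complement of
`A_k`, listed in reverse order. Hence splitting off the eigenvector `(1, …, 1)`, of eigenvalue `0`,
from the Laplacian of `A_{k+1}` by deflation at vertex `0` leaves `(k + 1) I - L_A^{(k)}`, up to
reversing the indices. So the spectrum of `A_{k+1}` consists of `0` and of the numbers `k + 1 - μ`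
for `μ` in the spectrum of `A_k`, and the sets `Λ_k` satisfy the same recursion.
-/

open Matrix Polynomial

section Deflation

variable {R : Type*} [CommRing R] {n : ℕ}

/-- Wielandt deflation of a matrix `A` at the index `p` along an eigenvector `v` with `v p = 1`:
the matrix which `A` induces on the quotient by `v`, in the coordinates other than `p`. -/
def deflate (A : Matrix (Fin (n + 1)) (Fin (n + 1)) R) (v : Fin (n + 1) → R) (p : Fin (n + 1)) :
    Matrix (Fin n) (Fin n) R :=
  of fun i j => A (p.succAbove i) (p.succAbove j) - v (p.succAbove i) * A p (p.succAbove j)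

lemma det_updateCol_mulVec {m : Type*} [Fintype m] [DecidableEq m] (A : Matrix m m R) (v : m → R)
    (p : m) : (A.updateCol p (A *ᵥ v)).det = v p * A.det := by
  have h : A *ᵥ v = fun i => ∑ j, v j • A i j := by
    ext i
    simp only [mulVec, dotProduct, smul_eq_mul, mul_comm]
  rw [h, det_updateCol_sum, smul_eq_mul]

lemma det_eq_mul_det_deflate {A : Matrix (Fin (n + 1)) (Fin (n + 1)) R} {v : Fin (n + 1) → R}
    {c : R} {p : Fin (n + 1)} (hv : v p = 1) (hA : A *ᵥ v = c • v) :
    A.det = c * (deflate A v p).det := by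
  -- A column operation turns `A` into `B`; row operations then clear column `p` off the diagonal.
  set B := A.updateCol p (c • v) with hB
  set D : Matrix (Fin (n + 1)) (Fin (n + 1)) R :=
    of fun i j => B i j - Function.update v p 0 i * B p j with hD
  have hAB : A.det = B.det := by
    rw [hB, ← hA, det_updateCol_mulVec, hv, one_mul]
  have hBD : B.det = D.det :=
    det_eq_of_forall_row_eq_smul_add_const (Function.update v p 0) p (Function.update_self ..)
      fun i j => by simp [hD]
  have hDpp : D p p = c := by simp [hD, hB, hv]
  have hDp (i) (hi : i ≠ p) : D i p = 0 := by simp [hD, hB, hi, hv, mul_comm]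
  have hminor : D.submatrix p.succAbove p.succAbove = deflate A v p := by
    ext i j
    simp [hD, hB, deflate]
  calc A.det = ∑ i : Fin (n + 1), (-1) ^ (i + p : ℕ) * D i p *
          (D.submatrix i.succAbove p.succAbove).det := by
        rw [hAB, hBD, det_succ_column D p]
    _ = (-1) ^ (p + p : ℕ) * D p p * (D.submatrix p.succAbove p.succAbove).det :=
        Fintype.sum_eq_single p fun i hi => by rw [hDp i hi, mul_zero, zero_mul]
    _ = c * (deflate A v p).det := by rw [hDpp, hminor, Even.neg_one_pow ⟨_, rfl⟩, one_mul]

lemma charpoly_eq_mul_charpoly_deflate {A : Matrix (Fin (n + 1)) (Fin (n + 1)) R}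
    {v : Fin (n + 1) → R} {c : R} {p : Fin (n + 1)} (hv : v p = 1) (hA : A *ᵥ v = c • v) :
    A.charpoly = (X - C c) * (deflate A v p).charpoly := by
  have hAX : A.charmatrix *ᵥ (C ∘ v) = (X - C c) • (C ∘ v) := by
    ext1 i
    have hAi : ∑ j, C (A i j) * C (v j) = C c * C (v i) := by
      simpa [mulVec, dotProduct] using congrArg C (congrFun hA i)
    simp [mulVec, dotProduct, charmatrix_apply, diagonal_apply, sub_mul, hAi]
  have hdeflate : deflate A.charmatrix (C ∘ v) p = (deflate A v p).charmatrix := by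
    ext1 i j
    simp only [deflate, of_apply, Function.comp_apply, charmatrix_apply, diagonal_apply,
      Fin.succAbove_right_inj, (Fin.succAbove_ne p _).symm, if_false, C_sub, C_mul]
    ring
  rw [charpoly, det_eq_mul_det_deflate (p := p) (by simp [hv]) hAX, hdeflate, charpoly]

end Deflation

lemma charpoly_scalar_sub {R n : Type*} [CommRing R] [Fintype n] [DecidableEq n] (c : R)
    (M : Matrix n n R) :
    (scalar n c - M).charpoly = (-1) ^ Fintype.card n * M.charpoly.comp (C c - X) := by
  have h : (scalar n c - M).charmatrix = -(compRingHom (C c - X)).mapMatrix M.charmatrix := by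
    ext1 i j
    rcases eq_or_ne i j with rfl | hij
    · simp
      ring
    · simp [hij]
  rw [charpoly, h, det_neg, ← RingHom.map_det, charpoly, coe_compRingHom_apply]

lemma card_filter_add_lt {k : ℕ} (i : Fin k) :
    (Finset.univ.filter fun j : Fin k => (i + j : ℕ) < k).card = k - i := by
  simp only [add_comm (i : ℕ), ← Nat.lt_sub_iff_add_lt, Fin.card_filter_val_lt]
  omega

/-- Adding a loop at every vertex `i` with `2 * i < k` does not change `D - A`, and makes the degree
of `i` equal to `k - i` throughout. -/
lemma antiregLap_apply {k : ℕ} (i j : Fin k) :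
    antiregLap k i j =
      (if i = j then (k - i : ℝ) else 0) - if (i + j : ℕ) < k then 1 else 0 := by
  have hlt (m : Fin k) : i.val + m.val + 2 ≤ k + 1 ↔ (i + m : ℕ) < k := by omega
  simp only [antiregLap, of_apply, hlt]
  rcases eq_or_ne i j with rfl | hij
  · rw [if_pos rfl, if_pos rfl, ← Finset.filter_filter, Finset.filter_ne', Finset.filter_erase]
    have hcard : ((Finset.univ.filter fun j : Fin k => (i + j : ℕ) < k).card : ℝ) = k - i := by
      rw [card_filter_add_lt, Nat.cast_sub i.isLt.le]
    split_ifs with h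
    · rw [Finset.cast_card_erase_of_mem (by simpa using h), hcard]
    · rw [Finset.erase_eq_of_notMem (by simpa using h), hcard, sub_zero]
  · rw [if_neg hij, if_neg hij, zero_sub, neg_ite, neg_zero]

lemma antiregLap_mulVec_one (k : ℕ) : antiregLap k *ᵥ 1 = 0 := by
  ext i
  simp only [mulVec, dotProduct_one, antiregLap_apply, Finset.sum_sub_distrib, Finset.sum_ite_eq,
    Finset.mem_univ, if_true, Finset.sum_boole, card_filter_add_lt, Nat.cast_sub i.isLt.le,
    sub_self, Pi.zero_apply]

lemma deflate_antiregLap_succ (k : ℕ) :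
    deflate (antiregLap (k + 1)) 1 0 =
      scalar (Fin k) (k + 1 : ℝ) - reindex Fin.revPerm Fin.revPerm (antiregLap k) := by
  ext i j
  have hdominating : antiregLap (k + 1) 0 j.succ = -1 := by
    simp [antiregLap_apply, (Fin.succ_ne_zero j).symm]
  have hdeflate : deflate (antiregLap (k + 1)) 1 0 i j = antiregLap (k + 1) i.succ j.succ + 1 := by
    simp [deflate, hdominating]
  have hcompl : (i.rev + j.rev : ℕ) < k ↔ ¬ (i.succ + j.succ : ℕ) < k + 1 := by
    simp only [Fin.val_rev, Fin.val_succ]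
    omega
  have hrev : (i.rev : ℝ) = k - (i + 1) := by
    rw [Fin.val_rev, Nat.cast_sub i.isLt, Nat.cast_succ]
  rw [hdeflate, Matrix.sub_apply, scalar_apply, diagonal_apply, reindex_apply, submatrix_apply,
    Fin.revPerm_symm, Fin.revPerm_apply, Fin.revPerm_apply, antiregLap_apply, antiregLap_apply,
    hrev]
  simp only [Fin.succ_inj, Fin.rev_inj, hcompl, ite_not]
  split_ifs <;> push_cast [Fin.val_succ] <;> ring

lemma charpoly_antiregLap_succ (k : ℕ) :
    (antiregLap (k + 1)).charpoly =
      X * ((-1) ^ k * (antiregLap k).charpoly.comp (C (k + 1 : ℝ) - X)) := by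
  rw [charpoly_eq_mul_charpoly_deflate (v := 1) (p := 0) (c := 0) rfl
    (by rw [antiregLap_mulVec_one, zero_smul]),
    deflate_antiregLap_succ, charpoly_scalar_sub, charpoly_reindex, Fintype.card_fin, C_0, sub_zero]

/-- The set `Λ_k = {0, …, k} \ {⌈k/2⌉}`. -/
def antiregEigenvalues (k : ℕ) : Finset ℕ := (Finset.range (k + 1)).erase ((k + 1) / 2)

lemma card_antiregEigenvalues (k : ℕ) : (antiregEigenvalues k).card = k := by
  rw [antiregEigenvalues, Finset.card_erase_of_mem (Finset.mem_range.2 (by omega)),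
    Finset.card_range, Nat.add_sub_cancel]

lemma prod_antiregEigenvalues_succ {M : Type*} [CommMonoid M] (k : ℕ) (f : ℕ → M) :
    ∏ m ∈ antiregEigenvalues (k + 1), f m = f 0 * ∏ m ∈ antiregEigenvalues k, f (k + 1 - m) := by
  have hmem {k m : ℕ} : m ∈ antiregEigenvalues k ↔ m ≠ (k + 1) / 2 ∧ m < k + 1 := by
    rw [antiregEigenvalues, Finset.mem_erase, Finset.mem_range]
  rw [← Finset.mul_prod_erase _ _ (hmem.2 (by omega) : 0 ∈ antiregEigenvalues (k + 1))]
  congr 1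
  refine Finset.prod_nbij' (k + 1 - ·) (k + 1 - ·) ?_ ?_ ?_ ?_ fun m hm => congrArg f ?_ <;>
    simp only [Finset.mem_erase, hmem] at * <;> omega

lemma charpoly_antiregLap (k : ℕ) :
    (antiregLap k).charpoly = ∏ m ∈ antiregEigenvalues k, (X - C (m : ℝ)) := by
  induction k with
  | zero => simp [antiregEigenvalues]
  | succ k ih =>
    have hreflect :
        (-1) ^ k * (∏ m ∈ antiregEigenvalues k, (X - C (m : ℝ))).comp (C (k + 1 : ℝ) - X) =
          ∏ m ∈ antiregEigenvalues k, (X - C ((k + 1 - m : ℕ) : ℝ)) := by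
      nth_rw 1 [← card_antiregEigenvalues k]
      rw [prod_comp, ← Finset.prod_neg]
      refine Finset.prod_congr rfl fun m hm => ?_
      have hmk : m ≤ k + 1 := (Finset.mem_range.1 (Finset.mem_of_mem_erase hm)).le
      rw [sub_comp, X_comp, C_comp, Nat.cast_sub hmk, Nat.cast_succ, C_sub]
      ring
    rw [charpoly_antiregLap_succ, ih, hreflect,
      prod_antiregEigenvalues_succ k fun m : ℕ => X - C (m : ℝ), Nat.cast_zero, C_0, sub_zero]

/-- for `k ≥ 2` the Laplacian spectrum of the `k`-vertex antiregular
graph consists of `k` distinct simple eigenvalues, namely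
`Λ_k = {0, 1, …, k} \ {⌈k/2⌉}`: the multiset of roots of the characteristic
polynomial (eigenvalues with multiplicity) is exactly the image of this set.
Here `⌈k/2⌉ = (k+1)/2` in natural-number arithmetic. -/
theorem antireg_spectrum (k : ℕ) (hk : 2 ≤ k) :
    (antiregLap k).charpoly.roots =
      Multiset.map (fun m : ℕ => (m : ℝ)) ((Finset.range (k + 1)).erase ((k + 1) / 2)).val := by
  have hprod : (antiregLap k).charpoly =
      (((antiregEigenvalues k).val.map (fun m : ℕ => (m : ℝ))).map fun a => X - C a).prod := by
    rw [charpoly_antiregLap, Multiset.map_map]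
    rfl
  rw [hprod, roots_multiset_prod_X_sub_C, antiregEigenvalues]
end

section
/- Let k ≥ 2, n ≥ 1, κ̄ = ⌈k/2⌉, and let 𝓛 = I_n ⊗ L_A^{(k)} + Σ_{i=1}^{n−1} z_i z_iᵀ with z_i = e_{ik} − e_{ik+κ̄} ∈ ℝ^{nk}. If v ∈ ℝ^k is an eigenvector of L_A^{(k)} with eigenvalue λ whose k-th entry is zero (v_k = 0), then the vector x = (vᵀ, 0, …, 0)ᵀ ∈ ℝ^{nk}, obtained by appending (n−1)k zeros to v, satisfies 𝓛 x = λ x. -/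
/-- The vector `z_i = e_{ik} - e_{ik+κ̄}` (1-indexed, `κ̄ = ⌈k/2⌉`, `i = p+1`),
on the product index set: copy `p`, vertex `k` minus copy `p+1`, vertex `κ̄`. -/
def zvec (n k : ℕ) (hk : 2 ≤ k) (p : Fin (n - 1)) : Fin n × Fin k → ℝ :=
  fun q =>
    (if q = (⟨p.val, by have := p.isLt; omega⟩, ⟨k - 1, by omega⟩) then (1 : ℝ) else 0) -
    (if q = (⟨p.val + 1, by have := p.isLt; omega⟩, ⟨(k + 1) / 2 - 1, by omega⟩) then 1 else 0)

/-- `L̄ = I_n ⊗ L_A^{(k)}`, the Laplacian of `n` disjoint copies of the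
`k`-vertex antiregular graph, indexed by (copy, vertex). -/
def copiesLap (n k : ℕ) : Matrix (Fin n × Fin k) (Fin n × Fin k) ℝ :=
  Matrix.kroneckerMap (· * ·) (1 : Matrix (Fin n) (Fin n) ℝ) (antiregLap k)

/-- `𝓛 = I_n ⊗ L_A^{(k)} + Σ_{i=1}^{n-1} z_i z_iᵀ`, the Laplacian of `n`
interconnected copies of the `k`-vertex antiregular graph. -/
def interLap (n k : ℕ) (hk : 2 ≤ k) : Matrix (Fin n × Fin k) (Fin n × Fin k) ℝ :=
  copiesLap n k + ∑ p : Fin (n - 1), Matrix.vecMulVec (zvec n k hk p) (zvec n k hk p)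

/-!
The block-diagonal matrix `I ⊗ M` acts on a vector supported on one copy as `M` acts on that copy,
and each rank-one coupling term kills every vector orthogonal to it. Inside the first copy, the only
vertex touched by an interconnecting edge is the terminal one, where `v` vanishes, so `x` is
orthogonal to every `z_p`.
-/

open Matrix
open scoped Kronecker

section OneCopy

variable {l m R : Type*} [DecidableEq l]

/-- The vector on `l` copies of the index set `m` that equals `v` on the copy `i` and vanishes on
all the others; for the first copy this is `x = (vᵀ, 0, …, 0)ᵀ`. It is written with `if` rather than
`Pi.single` so that `x` unfolds to it definitionally. -/
def extendCopy [Zero R] (i : l) (v : m → R) : l × m → R :=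
  fun q => if q.1 = i then v q.2 else 0

theorem extendCopy_smul {S : Type*} [Zero R] [SMulZeroClass S R] (c : S) (i : l) (v : m → R) :
    extendCopy i (c • v) = c • extendCopy i v := by
  ext q
  simp only [extendCopy, Pi.smul_apply, smul_ite, smul_zero]

variable [Fintype l] [Fintype m]

theorem dotProduct_extendCopy [NonUnitalNonAssocSemiring R] (z : l × m → R) (i : l) (v : m → R) :
    z ⬝ᵥ extendCopy i v = (fun b => z (i, b)) ⬝ᵥ v := by
  simp only [dotProduct, extendCopy, mul_ite, mul_zero, Fintype.sum_prod_type_right,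
    Finset.sum_ite_eq', Finset.mem_univ, if_true]

theorem one_kronecker_mulVec_extendCopy {m' : Type*} [NonAssocSemiring R]
    (M : Matrix m' m R) (i : l) (v : m → R) :
    ((1 : Matrix l l R) ⊗ₖ M) *ᵥ extendCopy i v = extendCopy i (M *ᵥ v) := by
  ext ⟨a, b⟩
  rw [mulVec, dotProduct_extendCopy]
  by_cases ha : a = i <;> simp [ha, extendCopy, mulVec, dotProduct, one_apply]

end OneCopy

theorem sum_vecMulVec_mulVec_eq_zero {ι m n R : Type*} [NonUnitalSemiring R] [Fintype n]
    {s : Finset ι} (u : ι → m → R) {w : ι → n → R} {x : n → R} (hw : ∀ p ∈ s, w p ⬝ᵥ x = 0) :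
    (∑ p ∈ s, vecMulVec (u p) (w p)) *ᵥ x = 0 := by
  rw [sum_mulVec]
  refine Finset.sum_eq_zero fun p hp => ?_
  rw [vecMulVec_mulVec, hw p hp, MulOpposite.op_zero, zero_smul]

theorem zvec_dotProduct {n k : ℕ} (hk : 2 ≤ k) (p : Fin (n - 1)) (x : Fin n × Fin k → ℝ) :
    zvec n k hk p ⬝ᵥ x =
      x (⟨p.val, by omega⟩, ⟨k - 1, by omega⟩) -
        x (⟨p.val + 1, by omega⟩, ⟨(k + 1) / 2 - 1, by omega⟩) := by
  simp only [zvec, dotProduct, sub_mul, Finset.sum_sub_distrib, ite_mul, one_mul, zero_mul,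
    Finset.sum_ite_eq', Finset.mem_univ, if_true]

theorem zvec_dotProduct_extendCopy_first_eq_zero {n k : ℕ} (hk : 2 ≤ k) (hn : 1 ≤ n)
    {v : Fin k → ℝ} (hlast : v ⟨k - 1, by omega⟩ = 0) (p : Fin (n - 1)) :
    zvec n k hk p ⬝ᵥ extendCopy (⟨0, hn⟩ : Fin n) v = 0 := by
  rw [zvec_dotProduct]
  simp [extendCopy, hlast]

theorem eigvec_extension_general {ι l m R : Type*} [Fintype l] [DecidableEq l] [Fintype m]
    [Semiring R] {M : Matrix m m R} {c : R} {v : m → R} (heig : M *ᵥ v = c • v) (i : l)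
    {s : Finset ι} (u : ι → l × m → R) {w : ι → l × m → R}
    (hw : ∀ p ∈ s, w p ⬝ᵥ extendCopy i v = 0) :
    ((1 : Matrix l l R) ⊗ₖ M + ∑ p ∈ s, vecMulVec (u p) (w p)) *ᵥ extendCopy i v =
      c • extendCopy i v := by
  rw [add_mulVec, one_kronecker_mulVec_extendCopy, heig, extendCopy_smul,
    sum_vecMulVec_mulVec_eq_zero u hw, add_zero]

/-- if `v` is an eigenvector of `L_A^{(k)}` with eigenvalue `λ`
whose `k`-th (last) entry vanishes, then `x = (vᵀ, 0, …, 0)ᵀ` (supported on the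
first copy) satisfies `𝓛 x = λ x`. -/
theorem eigvec_extension (k n : ℕ) (hk : 2 ≤ k) (hn : 1 ≤ n)
    (v : Fin k → ℝ) (lam : ℝ) (hv : v ≠ 0)
    (heig : (antiregLap k).mulVec v = lam • v)
    (hlast : v ⟨k - 1, by omega⟩ = 0) :
    (interLap n k hk).mulVec (fun q => if q.1 = (⟨0, hn⟩ : Fin n) then v q.2 else 0) =
      lam • fun q : Fin n × Fin k => if q.1 = (⟨0, hn⟩ : Fin n) then v q.2 else 0 :=
  eigvec_extension_general heig _ _ fun p _ =>
    zvec_dotProduct_extendCopy_first_eq_zero hk hn hlast p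
end

section
/- Let k ≥ 2, n ≥ 1, κ̄ = ⌈k/2⌉, and 𝓛 = I_n ⊗ L_A^{(k)} + Σ_{i=1}^{n−1} z_i z_iᵀ with z_i = e_{ik} − e_{ik+κ̄}. Then all nk eigenvalues of the real symmetric matrix 𝓛 are distinct, i.e., every eigenvalue of 𝓛 is simple. -/
open Matrix

section SimpleSpectrum

variable {m 𝕜 : Type*} [Fintype m] [DecidableEq m] [RCLike 𝕜]

/- Two orthonormal eigenvectors for one eigenvalue would have a nontrivial combination killed by
the functional. -/
lemma nodup_roots_charpoly_of_functional {A : Matrix m m 𝕜} (hA : A.IsHermitian)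
    (h : ∀ μ : ℝ, ∃ f : (m → 𝕜) →ₗ[𝕜] 𝕜, ∀ x, A *ᵥ x = μ • x → f x = 0 → x = 0) :
    A.charpoly.roots.Nodup := by
  rw [hA.roots_charpoly_eq_eigenvalues]
  refine Multiset.Nodup.map (fun a b hab ↦ ?_) Finset.univ.nodup
  replace hab : hA.eigenvalues a = hA.eigenvalues b := RCLike.ofReal_injective hab
  obtain ⟨f, hf⟩ := h (hA.eigenvalues a)
  let v : m → m → 𝕜 := fun i ↦ ⇑(hA.eigenvectorBasis i)
  have hv : LinearIndependent 𝕜 v :=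
    hA.eigenvectorBasis.toBasis.linearIndependent.map' (WithLp.linearEquiv 2 𝕜 (m → 𝕜)).toLinearMap
      (LinearEquiv.ker _)
  have hva : A *ᵥ v a = hA.eigenvalues a • v a := hA.mulVec_eigenvectorBasis a
  have hvb : A *ᵥ v b = hA.eigenvalues a • v b := hab ▸ hA.mulVec_eigenvectorBasis b
  have hcomb : f (v b) • v a - f (v a) • v b = 0 := by
    refine hf _ ?_ (by simp [mul_comm])
    rw [mulVec_sub, mulVec_smul, mulVec_smul, hva, hvb, smul_sub, smul_comm, smul_comm (f (v a))]
  by_contra hne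
  have hfb : f (v b) = 0 :=
    ((LinearIndepOn.pair_iff v hne).1 (hv.linearIndepOn _) _ (-f (v a))
      (by rw [neg_smul, ← sub_eq_add_neg, hcomb])).1
  exact hv.ne_zero b (hf _ hvb hfb)

end SimpleSpectrum

section Chain

variable {R V : Type*} [CommRing R] [DecidableEq V] {n : ℕ}

/-- The incidence vector of the link joining vertex `t` of copy `p` to vertex `c` of copy
`p + 1`. -/
def chainLink (t c : V) (p : Fin n) : Fin (n + 1) × V → R :=
  Pi.single (p.castSucc, t) 1 - Pi.single (p.succ, c) 1

/-- The block matrix of a chain of `n + 1` copies of `M`, vertex `t` of each copy being linked to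
vertex `c` of the next one. If `M` is the Laplacian of a graph, this is the Laplacian of the
interconnected copies. -/
def chainMatrix (n : ℕ) (M : Matrix V V R) (t c : V) :
    Matrix (Fin (n + 1) × V) (Fin (n + 1) × V) R :=
  kroneckerMap (· * ·) 1 M + ∑ p : Fin n, vecMulVec (chainLink t c p) (chainLink t c p)

lemma chainMatrix_isSymm {M : Matrix V V R} (hM : M.IsSymm) (t c : V) :
    (chainMatrix n M t c).IsSymm := by
  have hblocks : (kroneckerMap (· * ·) (1 : Matrix (Fin (n + 1)) _ R) M).IsSymm := by
    rw [IsSymm, ← kroneckerMap_transpose, transpose_one, hM.eq]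
  refine hblocks.add ?_
  simp only [IsSymm, transpose_sum, transpose_vecMulVec]

variable [Fintype V]

lemma chainLink_dotProduct (t c : V) (p : Fin n) (x : Fin (n + 1) × V → R) :
    chainLink t c p ⬝ᵥ x = x (p.castSucc, t) - x (p.succ, c) := by
  simp [chainLink, sub_dotProduct]

/-- The drop of `x` across the link entering each copy of the chain, with `0` for the first copy,
which no link enters. -/
def incomingDrop (t c : V) (x : Fin (n + 1) × V → R) : Fin (n + 1) → R :=
  Fin.cons 0 fun p ↦ chainLink t c p ⬝ᵥ x

/-- The drop of `x` across the link leaving each copy of the chain, with `0` for the last copy,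
which no link leaves. -/
def outgoingDrop (t c : V) (x : Fin (n + 1) × V → R) : Fin (n + 1) → R :=
  Fin.snoc (fun p ↦ chainLink t c p ⬝ᵥ x) 0

lemma sum_chainLink_dotProduct_smul (t c : V) (x : Fin (n + 1) × V → R) (i : Fin (n + 1)) :
    ∑ p, (chainLink t c p ⬝ᵥ x) • Function.curry (chainLink t c p) i =
      outgoingDrop t c x i • Pi.single t 1 - incomingDrop t c x i • Pi.single c 1 := by
  have hout : ∑ p, (if i = p.castSucc then chainLink t c p ⬝ᵥ x else 0) =
      outgoingDrop t c x i := by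
    refine Fin.lastCases ?_ (fun p ↦ ?_) i <;>
      simp [outgoingDrop, Fin.castSucc_ne_last, eq_comm]
  have hin : ∑ p, (if i = p.succ then chainLink t c p ⬝ᵥ x else 0) = incomingDrop t c x i := by
    refine Fin.cases ?_ (fun p ↦ ?_) i <;> simp [incomingDrop, Fin.succ_ne_zero, eq_comm]
  ext v
  simp only [← hout, ← hin, Finset.sum_apply, Pi.smul_apply, Pi.sub_apply, smul_eq_mul,
    Function.curry_apply, chainLink, Pi.single_apply, Prod.mk.injEq, mul_sub,
    Finset.sum_sub_distrib, ite_and, mul_ite, mul_one, mul_zero]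
  split_ifs <;> simp

lemma curry_chainMatrix_mulVec (M : Matrix V V R) (t c : V) (x : Fin (n + 1) × V → R)
    (i : Fin (n + 1)) :
    Function.curry (chainMatrix n M t c *ᵥ x) i = M *ᵥ Function.curry x i +
      (outgoingDrop t c x i • Pi.single t 1 - incomingDrop t c x i • Pi.single c 1) := by
  rw [← sum_chainLink_dotProduct_smul]
  ext v
  simp only [Function.curry_apply, chainMatrix, add_mulVec, sum_mulVec, vecMulVec_mulVec,
    Pi.add_apply, Finset.sum_apply, Pi.smul_apply, op_smul_eq_smul]
  congr 1
  simp [mulVec, dotProduct, Fintype.sum_prod_type, one_apply, Function.curry_apply]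

variable {M : Matrix V V R} {t c : V} {μ : R} {x : Fin (n + 1) × V → R}

lemma mulVec_curry_of_chainMatrix_eigenvector (hx : chainMatrix n M t c *ᵥ x = μ • x)
    (i : Fin (n + 1)) :
    M *ᵥ Function.curry x i = μ • Function.curry x i +
      (incomingDrop t c x i • Pi.single c 1 - outgoingDrop t c x i • Pi.single t 1) := by
  have h := curry_chainMatrix_mulVec M t c x i
  rw [hx, show Function.curry (μ • x) i = μ • Function.curry x i from rfl] at h
  rw [h]
  abel

lemma chainLink_dotProduct_eq_zero [NoZeroDivisors R] (hM : M.IsSymm) {u : V → R}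
    (hu : M *ᵥ u = μ • u) (hut : u t = 0) (huc : u c ≠ 0)
    (hx : chainMatrix n M t c *ᵥ x = μ • x) (p : Fin n) : chainLink t c p ⬝ᵥ x = 0 := by
  have hpair : u ⬝ᵥ M *ᵥ Function.curry x p.succ = μ • (u ⬝ᵥ Function.curry x p.succ) := by
    rw [dotProduct_mulVec, ← mulVec_transpose, hM.eq, hu, smul_dotProduct]
  rw [mulVec_curry_of_chainMatrix_eigenvector hx] at hpair
  simpa [incomingDrop, dotProduct_add, dotProduct_sub, hut, huc] using hpair

lemma chainMatrix_eigenvector_eq_zero_of_first (hc : ∀ w, M *ᵥ w = μ • w → w c = 0 → w = 0)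
    (hx : chainMatrix n M t c *ᵥ x = μ • x) (hlink : ∀ p : Fin n, chainLink t c p ⬝ᵥ x = 0)
    (h0 : x (0, c) = 0) : x = 0 := by
  have hrow (i : Fin (n + 1)) : M *ᵥ Function.curry x i = μ • Function.curry x i := by
    have hin : incomingDrop t c x i = 0 := by
      refine Fin.cases ?_ (fun p ↦ ?_) i <;> simp [incomingDrop, hlink]
    have hout : outgoingDrop t c x i = 0 := by
      refine Fin.lastCases ?_ (fun p ↦ ?_) i <;> simp [outgoingDrop, hlink]
    simpa [hin, hout] using mulVec_curry_of_chainMatrix_eigenvector hx i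
  have hcopy (i : Fin (n + 1)) : Function.curry x i = 0 := by
    induction i using Fin.induction with
    | zero => exact hc _ (hrow 0) h0
    | succ p ih =>
      have ht : x (p.castSucc, t) = 0 := congrFun ih t
      have hdrop := hlink p
      rw [chainLink_dotProduct, ht, zero_sub, neg_eq_zero] at hdrop
      exact hc _ (hrow p.succ) hdrop
  ext ⟨i, v⟩
  exact congrFun (hcopy i) v

lemma chainMatrix_eigenvector_eq_zero_of_last
    (ht : ∀ (w : V → R) (d : R), M *ᵥ w = μ • w + d • Pi.single c 1 → w t = 0 → d = 0 ∧ w = 0)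
    (hx : chainMatrix n M t c *ᵥ x = μ • x) (hlast : x (Fin.last n, t) = 0) : x = 0 := by
  have hcopy (i : Fin (n + 1)) : incomingDrop t c x i = 0 ∧ Function.curry x i = 0 := by
    induction i using Fin.reverseInduction with
    | last =>
      have hout : outgoingDrop t c x (Fin.last n) = 0 := by simp [outgoingDrop]
      have hrow := mulVec_curry_of_chainMatrix_eigenvector hx (Fin.last n)
      exact ht _ _ (by simpa [hout] using hrow) hlast
    | cast p ih =>
      obtain ⟨hdrop, hnext⟩ := ih
      rw [incomingDrop, Fin.cons_succ] at hdrop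
      have hout : outgoingDrop t c x p.castSucc = 0 := by simpa [outgoingDrop] using hdrop
      have hxt : x (p.castSucc, t) = 0 := by
        have hxc : x (p.succ, c) = 0 := congrFun hnext c
        rwa [chainLink_dotProduct, hxc, sub_zero] at hdrop
      have hrow := mulVec_curry_of_chainMatrix_eigenvector hx p.castSucc
      exact ht _ _ (by simpa [hout] using hrow) hxt
  ext ⟨i, v⟩
  exact congrFun (hcopy i).2 v

theorem exists_coord_determining_chainMatrix_eigenvector [NoZeroDivisors R] (n : ℕ)
    (hM : M.IsSymm) (hc : ∀ w, M *ᵥ w = μ • w → w c = 0 → w = 0)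
    (ht : ∀ (w : V → R) (d : R), M *ᵥ w = μ • w + d • Pi.single c 1 → w t = 0 → d = 0) :
    ∃ q, ∀ x, chainMatrix n M t c *ᵥ x = μ • x → x q = 0 → x = 0 := by
  by_cases hu : ∃ u, M *ᵥ u = μ • u ∧ u t = 0 ∧ u ≠ 0
  · obtain ⟨u, hu, hut, hne⟩ := hu
    have huc : u c ≠ 0 := mt (hc u hu) hne
    exact ⟨(0, c), fun x hx ↦ chainMatrix_eigenvector_eq_zero_of_first hc hx
      (chainLink_dotProduct_eq_zero hM hu hut huc hx)⟩
  · push Not at hu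
    refine ⟨(Fin.last n, t), fun x hx ↦
      chainMatrix_eigenvector_eq_zero_of_last (fun w d hw hwt ↦ ?_) hx⟩
    obtain rfl := ht w d hw hwt
    exact ⟨rfl, hu w (by simpa using hw) hwt⟩

end Chain

section Antiregular

variable {k : ℕ}

/-- The `k`-vertex antiregular graph, with vertices numbered from `0`. -/
def antiregGraph (k : ℕ) : SimpleGraph (Fin k) where
  Adj i j := i ≠ j ∧ (i : ℕ) + j < k
  symm := ⟨fun _ _ h ↦ ⟨h.1.symm, by omega⟩⟩
  loopless := ⟨fun _ h ↦ h.1 rfl⟩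

@[simp]
lemma antiregGraph_adj {i j : Fin k} : (antiregGraph k).Adj i j ↔ i ≠ j ∧ (i : ℕ) + j < k :=
  Iff.rfl

instance : DecidableRel (antiregGraph k).Adj :=
  fun i j ↦ inferInstanceAs (Decidable (i ≠ j ∧ (i : ℕ) + j < k))

lemma antiregLap_eq_lapMatrix (k : ℕ) : antiregLap k = (antiregGraph k).lapMatrix ℝ := by
  ext i j
  rcases eq_or_ne i j with rfl | hij
  · simp [antiregLap, SimpleGraph.lapMatrix, SimpleGraph.degMatrix, SimpleGraph.degree,
      SimpleGraph.neighborFinset_eq_filter, eq_comm]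
  · simp [antiregLap, SimpleGraph.lapMatrix, SimpleGraph.degMatrix, hij, neg_ite]

lemma antiregLap_isSymm (k : ℕ) : (antiregLap k).IsSymm :=
  antiregLap_eq_lapMatrix k ▸ (antiregGraph k).isSymm_lapMatrix (R := ℝ)

/- The term `j = i` vanishes, so the sum may run over all `j` with `i + j < k`. -/
lemma antiregLap_mulVec_apply (x : Fin k → ℝ) (i : Fin k) :
    (antiregLap k *ᵥ x) i = ∑ j : Fin k, if (i : ℕ) + j < k then x i - x j else 0 := by
  rw [antiregLap_eq_lapMatrix, SimpleGraph.lapMatrix_mulVec_apply, ← nsmul_eq_mul,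
    ← SimpleGraph.card_neighborFinset_eq_degree, ← Finset.sum_const, ← Finset.sum_sub_distrib,
    SimpleGraph.neighborFinset_eq_filter, Finset.sum_filter]
  refine Finset.sum_congr rfl fun j _ ↦ ?_
  rcases eq_or_ne i j with rfl | hij
  · simp
  · simp [hij]

lemma antiregLap_mulVec_zero (x : Fin (k + 1) → ℝ) :
    (antiregLap (k + 1) *ᵥ x) 0 = (k + 1) * x 0 - ∑ j, x j := by
  simp [antiregLap_mulVec_apply, Fin.is_le]

lemma antiregLap_mulVec_last (x : Fin (k + 1) → ℝ) :
    (antiregLap (k + 1) *ᵥ x) (Fin.last k) = x (Fin.last k) - x 0 := by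
  simp [antiregLap_mulVec_apply]

lemma antiregLap_mulVec_sub_const (x : Fin k → ℝ) (a : ℝ) :
    antiregLap k *ᵥ (x - Function.const _ a) = antiregLap k *ᵥ x := by
  ext i
  simp [antiregLap_mulVec_apply]

lemma sum_antiregLap_mulVec (x : Fin k → ℝ) : ∑ i, (antiregLap k *ᵥ x) i = 0 := by
  have hone : antiregLap k *ᵥ 1 = 0 := by
    ext i
    simp [antiregLap_mulVec_apply]
  rw [← one_dotProduct, dotProduct_mulVec, ← mulVec_transpose, (antiregLap_isSymm k).eq, hone,
    zero_dotProduct]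

/-- The restriction of a vector on `A_{k+2}` to the copy of `A_k` that remains when the dominating
vertex `0` and the terminal vertex are deleted. -/
def antiregCore (x : Fin (k + 2) → ℝ) : Fin k → ℝ := fun i ↦ x i.succ.castSucc

lemma antiregCore_antiregLap_mulVec (x : Fin (k + 2) → ℝ) :
    antiregCore (antiregLap (k + 2) *ᵥ x) =
      antiregLap k *ᵥ antiregCore x + antiregCore x - Function.const _ (x 0) := by
  ext i
  have hcore (j : Fin k) : (i : ℕ) + 1 + (j + 1) < k + 2 ↔ (i : ℕ) + j < k := by omega
  have hlast : ¬ (i : ℕ) + 1 + (k + 1) < k + 2 := by omega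
  simp only [antiregCore, antiregLap_mulVec_apply, Fin.sum_univ_castSucc (n := k + 1),
    Fin.sum_univ_succ (n := k), Pi.add_apply, Pi.sub_apply, Function.const_apply,
    Fin.val_castSucc, Fin.val_succ, Fin.val_last, hcore, hlast, if_false]
  simp only [Fin.castSucc_zero, Fin.val_zero, add_zero]
  rw [if_pos (by omega)]
  ring

/-- The degree-repeating vertex `κ̄` of `A_{k+1}`, with vertices numbered from `0`. -/
def midVertex (k : ℕ) : Fin (k + 1) := ⟨k / 2, by omega⟩

lemma antiregCore_midVertex (x : Fin (k + 3) → ℝ) :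
    antiregCore x (midVertex k) = x (midVertex (k + 2)) :=
  congrArg x (Fin.ext (by simp [midVertex]))

section Eigenvector

variable {μ : ℝ}

lemma antiregLap_mulVec_antiregCore_of_eigenvector {x : Fin (k + 2) → ℝ}
    (hx : antiregLap (k + 2) *ᵥ x = μ • x) :
    antiregLap k *ᵥ antiregCore x = (μ - 1) • antiregCore x + Function.const _ (x 0) := by
  have h := antiregCore_antiregLap_mulVec x
  rw [hx, show antiregCore (μ • x) = μ • antiregCore x from rfl] at h
  rw [sub_smul, one_smul, h]
  abel

lemma antiregLap_mulVec_antiregCore_sub_last_of_eigenvector {x : Fin (k + 2) → ℝ}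
    (hx : antiregLap (k + 2) *ᵥ x = μ • x) :
    antiregLap k *ᵥ (antiregCore x - Function.const _ (x (Fin.last _))) =
      (μ - 1) • (antiregCore x - Function.const _ (x (Fin.last _))) := by
  have hlast : x (Fin.last _) - x 0 = μ * x (Fin.last _) := by
    rw [← antiregLap_mulVec_last, hx, Pi.smul_apply, smul_eq_mul]
  rw [antiregLap_mulVec_sub_const, antiregLap_mulVec_antiregCore_of_eigenvector hx]
  ext i
  simp only [Pi.add_apply, Pi.sub_apply, Pi.smul_apply, Function.const_apply, smul_eq_mul]
  linear_combination -hlast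

lemma antiregLap_eigenvalue_of_apply_zero_ne_zero {x : Fin (k + 1) → ℝ}
    (hx : antiregLap (k + 1) *ᵥ x = μ • x) (h0 : x 0 ≠ 0) : μ = 0 ∨ μ = k + 1 := by
  refine or_iff_not_imp_left.2 fun hμ ↦ ?_
  have hsum : ∑ j, x j = 0 := by
    have h := sum_antiregLap_mulVec x
    rw [hx] at h
    simpa [← Finset.mul_sum, hμ] using h
  have hrow : (k + 1) * x 0 = μ * x 0 := by
    rw [← smul_eq_mul μ, ← Pi.smul_apply, ← hx, antiregLap_mulVec_zero, hsum, sub_zero]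
  exact (mul_right_cancel₀ h0 hrow).symm

lemma antiregLap_eigenvector_eq_zero_of_antiregCore {x : Fin (k + 2) → ℝ}
    (hx : antiregLap (k + 2) *ᵥ x = μ • x) (h0 : x 0 = 0) (hcore : antiregCore x = 0) : x = 0 := by
  have hmid (i : Fin k) : x i.succ.castSucc = 0 := congrFun hcore i
  have hsum : ∑ j, x j = 0 := by
    have h := antiregLap_mulVec_zero x
    rw [hx] at h
    simpa [h0] using h
  have hlast : x (Fin.last _) = 0 := by
    rw [Fin.sum_univ_castSucc, Fin.sum_univ_succ] at hsum
    simpa only [Fin.castSucc_zero, h0, hmid, Finset.sum_const_zero, zero_add] using hsum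
  ext i
  refine Fin.lastCases hlast (fun i ↦ ?_) i
  exact Fin.cases h0 hmid i

theorem antiregLap_eigenvector_eq_zero_of_notMem_Icc (hμ : μ ∉ Set.Icc 0 (k : ℝ)) {x : Fin k → ℝ}
    (hx : antiregLap k *ᵥ x = μ • x) : x = 0 := by
  induction k using Nat.twoStepInduction generalizing μ with
  | zero => exact Subsingleton.elim _ _
  | one =>
    have hμ0 : μ ≠ 0 := fun h ↦ hμ (by simp [h])
    have h := sum_antiregLap_mulVec x
    rw [hx] at h
    ext i
    rw [Subsingleton.elim i 0]
    simpa [hμ0] using h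
  | more k ih _ =>
    have h0 : x 0 = 0 := by
      by_contra h0
      rcases antiregLap_eigenvalue_of_apply_zero_ne_zero hx h0 with rfl | rfl
      · exact hμ ⟨le_rfl, by positivity⟩
      · exact hμ ⟨by positivity, by push_cast; linarith⟩
    refine antiregLap_eigenvector_eq_zero_of_antiregCore hx h0 (ih (μ := μ - 1) (fun h ↦ hμ ?_) ?_)
    · obtain ⟨h1, h2⟩ := h
      exact ⟨by linarith, by push_cast; linarith⟩
    · simpa [h0] using antiregLap_mulVec_antiregCore_of_eigenvector hx

theorem antiregLap_eigenvector_eq_zero_of_midVertex {x : Fin (k + 1) → ℝ}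
    (hx : antiregLap (k + 1) *ᵥ x = μ • x) (hmid : x (midVertex k) = 0) : x = 0 := by
  induction k using Nat.twoStepInduction generalizing μ with
  | zero =>
    ext i
    rwa [Fin.eq_zero i]
  | one => exact antiregLap_eigenvector_eq_zero_of_antiregCore hx hmid (Subsingleton.elim _ _)
  | more k ih _ =>
    have h0 : x 0 = 0 := by
      by_contra h0
      have hμ : μ - 1 ∉ Set.Icc 0 ((k + 1 : ℕ) : ℝ) := by
        rintro ⟨h1, h2⟩
        push_cast at h2
        rcases antiregLap_eigenvalue_of_apply_zero_ne_zero hx h0 with rfl | rfl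
        · linarith
        · push_cast at h2; linarith
      have hconst := antiregLap_eigenvector_eq_zero_of_notMem_Icc hμ
        (antiregLap_mulVec_antiregCore_sub_last_of_eigenvector hx)
      have hlast : x (Fin.last _) = 0 := by
        simpa [antiregCore_midVertex, hmid] using congrFun hconst (midVertex k)
      have hrow := antiregLap_mulVec_last x
      rw [hx] at hrow
      exact h0 (by simpa [hlast] using hrow)
    refine antiregLap_eigenvector_eq_zero_of_antiregCore hx h0 (ih (μ := μ - 1) ?_ ?_)
    · simpa [h0] using antiregLap_mulVec_antiregCore_of_eigenvector hx
    · rw [antiregCore_midVertex, hmid]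

theorem antiregLap_source_eq_zero_of_last {w : Fin (k + 2) → ℝ} {d : ℝ}
    (hw : antiregLap (k + 2) *ᵥ w = μ • w + d • Pi.single (midVertex (k + 1)) 1)
    (hlast : w (Fin.last _) = 0) : d = 0 := by
  have h0 : w 0 = 0 := by
    have hne : Fin.last (k + 1) ≠ midVertex (k + 1) := by
      simp only [ne_eq, Fin.ext_iff, Fin.val_last, midVertex]; omega
    have h := antiregLap_mulVec_last w
    rw [hw] at h
    simpa [hlast, hne] using h
  have hsum : ∑ j, w j = 0 := by
    cases k with
    | zero => simpa [Fin.sum_univ_two, h0] using hlast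
    | succ k =>
      have hne : (0 : Fin (k + 3)) ≠ midVertex (k + 2) := by
        simp only [ne_eq, Fin.ext_iff, Fin.val_zero, midVertex]; omega
      have h := antiregLap_mulVec_zero w
      rw [hw] at h
      simpa [h0, hne] using h
  have h := sum_antiregLap_mulVec w
  rw [hw] at h
  simpa [Finset.sum_add_distrib, ← Finset.mul_sum, hsum] using h

end Eigenvector

end Antiregular

lemma interLap_eq_chainMatrix (n k : ℕ) (hk : 2 ≤ k + 2) :
    interLap (n + 1) (k + 2) hk =
      chainMatrix n (antiregLap (k + 2)) (Fin.last (k + 1)) (midVertex (k + 1)) := by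
  have hmid : midVertex (k + 1) = ⟨(k + 2 + 1) / 2 - 1, by omega⟩ :=
    Fin.ext (by simp only [midVertex]; omega)
  have hlink (p : Fin n) :
      zvec (n + 1) (k + 2) hk p = chainLink (Fin.last (k + 1)) (midVertex (k + 1)) p := by
    ext q
    simp only [zvec, chainLink, Pi.sub_apply, Pi.single_apply, hmid]
    rfl
  simp only [interLap, chainMatrix, ← hlink]
  rfl

/-- Theorem: distinct eigenvalues.  The real symmetric matrix `𝓛`
(the Laplacian of `n` interconnected copies of the `k`-vertex antiregular graph)
has `n*k` eigenvalues, all distinct: its characteristic polynomial has `n*k`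
roots and they are pairwise distinct. -/
theorem interLap_distinct_eigenvalues (k n : ℕ) (hk : 2 ≤ k) (hn : 1 ≤ n) :
    Multiset.card (interLap n k hk).charpoly.roots = n * k ∧
    (interLap n k hk).charpoly.roots.Nodup := by
  obtain ⟨n, rfl⟩ := Nat.exists_eq_add_of_le' hn
  obtain ⟨k, rfl⟩ := Nat.exists_eq_add_of_le' hk
  have hA : (interLap (n + 1) (k + 2) hk).IsHermitian := by
    rw [interLap_eq_chainMatrix, IsHermitian, conjTranspose_eq_transpose_of_trivial]
    exact chainMatrix_isSymm (antiregLap_isSymm _) _ _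
  constructor
  · rw [hA.roots_charpoly_eq_eigenvalues]
    simp
  · refine nodup_roots_charpoly_of_functional hA fun μ ↦ ?_
    obtain ⟨q, hq⟩ := exists_coord_determining_chainMatrix_eigenvector n
      (antiregLap_isSymm (k + 2)) (t := Fin.last (k + 1))
      (fun _ ↦ antiregLap_eigenvector_eq_zero_of_midVertex (μ := μ))
      (fun _ _ ↦ antiregLap_source_eq_zero_of_last)
    exact ⟨LinearMap.proj q, interLap_eq_chainMatrix n k hk ▸ hq⟩
end

section
/- Let A be a real square matrix of order m such that the first entry of every eigenvector of A is nonzero (i.e., whenever v ∈ ℝ^m is nonzero and Av = λv for some real λ, then v_1 ≠ 0). Let 𝒜 be the real square matrix of order m+1 given by 𝒜 = [[0, 0ᵀ], [0, A]] + (e_1 − e_2)(e_1 − e_2)ᵀ, where e_1, e_2 ∈ ℝ^{m+1} are standard basis vectors. Then the first entry of every eigenvector of 𝒜 is nonzero: whenever w ∈ ℝ^{m+1} is nonzero and 𝒜w = μw for some real μ, then w_1 ≠ 0. -/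
/-! Suppose `𝒜 w = μ w` with `w₁ = 0`. The first row of this equation reads `w₁ - w₂ = μ w₁`, so
`w₂ = 0` as well. Hence the rank-one term `(e₁ - e₂)(e₁ - e₂)ᵀ` kills `w`, and the remaining rows
say that `v = (w₂, …, w_{m+1})` satisfies `A v = μ v`. Since `v` is nonzero with first entry
`w₂ = 0`, this contradicts the hypothesis on `A`. -/

open Matrix

theorem submatrix_mulVec_comp_of_support_subset_range {κ ι τ ν R : Type*} [Fintype κ]
    [Fintype ι] [NonUnitalNonAssocSemiring R] {f : ι → κ} (hf : f.Injective) (M : Matrix τ κ R)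
    (g : ν → τ) {w : κ → R} (hw : Function.support w ⊆ Set.range f) :
    M.submatrix g f *ᵥ (w ∘ f) = (M *ᵥ w) ∘ g := by
  ext x
  refine Fintype.sum_of_injective f hf _ _ (fun y hy => ?_) fun _ => rfl
  rw [Function.notMem_support.mp (mt (@hw y) hy), mul_zero]

section EdgeLaplacian

variable {κ R : Type*} [DecidableEq κ] [Ring R]

/-- The matrix `(e_i - e_j)(e_i - e_j)ᵀ`; for `i ≠ j` it is the Laplacian of the graph on `κ` whose
only edge joins `i` and `j`. -/
def edgeLaplacian (i j : κ) : Matrix κ κ R :=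
  vecMulVec (Pi.single i 1 - Pi.single j 1) (Pi.single i 1 - Pi.single j 1)

variable [Fintype κ]

theorem edgeLaplacian_mulVec (i j : κ) (w : κ → R) :
    edgeLaplacian i j *ᵥ w =
      MulOpposite.op (w i - w j) • (Pi.single i 1 - Pi.single j 1 : κ → R) := by
  rw [edgeLaplacian, vecMulVec_mulVec, sub_dotProduct, single_one_dotProduct,
    single_one_dotProduct]

theorem edgeLaplacian_mulVec_apply_left {i j : κ} (hij : i ≠ j) (w : κ → R) :
    (edgeLaplacian i j *ᵥ w) i = w i - w j := by
  simp [edgeLaplacian_mulVec, hij]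

theorem edgeLaplacian_mulVec_eq_zero {i j : κ} {w : κ → R} (h : w i = w j) :
    edgeLaplacian i j *ᵥ w = 0 := by
  rw [edgeLaplacian_mulVec, h, sub_self, MulOpposite.op_zero, zero_smul]

variable {B : Matrix κ κ R} {i j : κ} {μ : R} {w : κ → R}

theorem apply_eq_zero_of_add_edgeLaplacian_mulVec_eq_smul (hij : i ≠ j) (hB : B.row i = 0)
    (hw : (B + edgeLaplacian i j) *ᵥ w = μ • w) (hi : w i = 0) : w j = 0 := by
  have row_i : (B *ᵥ w) i + (edgeLaplacian i j *ᵥ w) i = μ * w i := by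
    simpa only [add_mulVec, Pi.add_apply, Pi.smul_apply, smul_eq_mul] using congrFun hw i
  have mulVec_i : (B *ᵥ w) i = 0 := by
    change B.row i ⬝ᵥ w = 0
    rw [hB, zero_dotProduct]
  rwa [mulVec_i, edgeLaplacian_mulVec_apply_left hij, hi, mul_zero, zero_add, zero_sub,
    neg_eq_zero] at row_i

theorem mulVec_eq_smul_of_add_edgeLaplacian_mulVec_eq_smul (hij : w i = w j)
    (hw : (B + edgeLaplacian i j) *ᵥ w = μ • w) : B *ᵥ w = μ • w := by
  rwa [add_mulVec, edgeLaplacian_mulVec_eq_zero hij, add_zero] at hw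

/-- `B.submatrix f f`, which is `B` with row and column `i` deleted, plays the role of `A`. -/
theorem first_entry_nonzero_extension_general {ι : Type*} [Fintype ι] {f : ι → κ}
    (hf : f.Injective) (hrange : Set.range f = {i}ᶜ) (hB : B.row i = 0) {k : ι}
    (hA : ∀ v : ι → R, v ≠ 0 → B.submatrix f f *ᵥ v = μ • v → v k ≠ 0) (hw : w ≠ 0)
    (hμ : (B + edgeLaplacian i (f k)) *ᵥ w = μ • w) : w i ≠ 0 := by
  intro hi
  have i_ne : i ≠ f k := Ne.symm (hrange.le ⟨k, rfl⟩)
  have support_subset : Function.support w ⊆ Set.range f := by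
    rw [hrange, Set.subset_compl_singleton_iff, Function.notMem_support]
    exact hi
  have hk : w (f k) = 0 := apply_eq_zero_of_add_edgeLaplacian_mulVec_eq_smul i_ne hB hμ hi
  have eigen_B : B *ᵥ w = μ • w :=
    mulVec_eq_smul_of_add_edgeLaplacian_mulVec_eq_smul (hi.trans hk.symm) hμ
  have eigen_submatrix : B.submatrix f f *ᵥ (w ∘ f) = μ • (w ∘ f) := by
    rw [submatrix_mulVec_comp_of_support_subset_range hf B f support_subset, eigen_B]
    rfl
  have comp_ne_zero : w ∘ f ≠ 0 := by
    intro h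
    obtain ⟨x, hx⟩ := Function.ne_iff.mp hw
    obtain ⟨y, rfl⟩ := support_subset hx
    exact hx (congrFun h y)
  exact hA (w ∘ f) comp_ne_zero eigen_submatrix hk

end EdgeLaplacian

theorem edgeLaplacian_zero_succ_zero_eq_vecMulVec {R : Type*} [Ring R] {m : ℕ} (hm : 0 < m) :
    (edgeLaplacian 0 (Fin.succ ⟨0, hm⟩) : Matrix (Fin (m + 1)) (Fin (m + 1)) R) =
      vecMulVec (fun i => if i.val = 0 then 1 else if i.val = 1 then -1 else 0)
        (fun i => if i.val = 0 then 1 else if i.val = 1 then -1 else 0) := by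
  have single_sub_single : (Pi.single 0 1 - Pi.single (Fin.succ ⟨0, hm⟩) 1 : Fin (m + 1) → R) =
      fun i => if i.val = 0 then 1 else if i.val = 1 then -1 else 0 := by
    ext i
    refine i.cases (by simp) fun j => ?_
    by_cases hj : j.val = 0 <;> simp [Pi.single_apply, Fin.ext_iff, hj]
  rw [edgeLaplacian, single_sub_single]

/-- Theorem: preservation of nonzero first eigenvector entry.
If every eigenvector of the real `m × m` matrix `A` has nonzero first entry,
then so does every eigenvector of
`𝒜 = [[0, 0ᵀ], [0, A]] + (e₁ - e₂)(e₁ - e₂)ᵀ` of order `m+1`. -/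
theorem first_entry_nonzero_extension (m : ℕ) (hm : 0 < m)
    (A : Matrix (Fin m) (Fin m) ℝ)
    (hA : ∀ (lam : ℝ) (v : Fin m → ℝ), v ≠ 0 → A.mulVec v = lam • v → v ⟨0, hm⟩ ≠ 0) :
    ∀ (mu : ℝ) (w : Fin (m + 1) → ℝ), w ≠ 0 →
      ((Matrix.of fun i j : Fin (m + 1) =>
          if hi : i.val = 0 then 0
          else if hj : j.val = 0 then 0
          else A ⟨i.val - 1, by have := i.isLt; omega⟩ ⟨j.val - 1, by have := j.isLt; omega⟩) +
        Matrix.vecMulVec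
          (fun i : Fin (m + 1) => if i.val = 0 then 1 else if i.val = 1 then -1 else 0)
          (fun i : Fin (m + 1) => if i.val = 0 then 1 else if i.val = 1 then -1 else 0)).mulVec w
        = mu • w →
      w ⟨0, Nat.succ_pos m⟩ ≠ 0 := by
  intro mu w hw h
  rw [← edgeLaplacian_zero_succ_zero_eq_vecMulVec hm] at h
  refine first_entry_nonzero_extension_general (Fin.succ_injective m) (Fin.range_succ m) rfl
    ?_ hw h
  -- Deleting the first row and column of the block matrix returns `A` definitionally.
  exact hA mu
end
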